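/- arXiv:1411.0446 — 2 statements merged into one kernel-verified Lean document; each statement's English description precedes it below -/
import Mathlib

section
/- Conditional-mean estimate identity (Theorem 5): in the two-user MAC Gaussian setting with finite-support inputs, for every y ∈ ℂ^{nr}, √snr·H1·P1·x̂1(y) + √snr·H2·P2·x̂2(y) = y + ∇_y p_y(y)/p_y(y), where ∇_y p_y(y) denotes the conjugate Wirtinger gradient of p_y at y, characterized by d/dt p_y(y + tΔ)|_{t=0} = 2·Re⟨∇_y p_y(y), Δ⟩ for all Δ ∈ ℂ^{nr}. -/
/-!
Each mixture component is a Gaussian in `y` centred at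
`m i j = √snr • H1 P1 a1 i + √snr • H2 P2 a2 j`, so its conjugate Wirtinger gradient is the
component times `m i j - y` (`hasDerivAt_pcond`). Summing against the weights, the gradient of
the output density is `∑ i j, w1 i * w2 j * p i j(y) • (m i j - y)` (`hasDerivAt_pout`), and a
gradient is determined by its real pairings with all directions (`eq_of_re_pairing`).
By linearity of `mulVec`, the same weighted sum of the centres is `pout` times the left-hand side
of the identity (`pout_smul_estimates`); since `pout > 0`, dividing gives the claim.
-/

open MeasureTheory Matrix

noncomputable section

/-- Squared Euclidean norm of a complex vector. -/
def cnormSq {n : ℕ} (v : Fin n → ℂ) : ℝ := ∑ i, Complex.normSq (v i)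

/-- Data of a two-user multiple-access Gaussian channel with independent
finite-support inputs: channel matrices, precoders, and the atoms and weights
of the two input distributions. -/
structure MAC (nr nt k1 k2 : ℕ) where
  H1 : Matrix (Fin nr) (Fin nt) ℂ
  H2 : Matrix (Fin nr) (Fin nt) ℂ
  P1 : Matrix (Fin nt) (Fin nt) ℂ
  P2 : Matrix (Fin nt) (Fin nt) ℂ
  w1 : Fin k1 → ℝ
  w2 : Fin k2 → ℝ
  a1 : Fin k1 → Fin nt → ℂ
  a2 : Fin k2 → Fin nt → ℂ
  w1_nonneg : ∀ i, 0 ≤ w1 i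
  w2_nonneg : ∀ j, 0 ≤ w2 j
  w1_sum : ∑ i, w1 i = 1
  w2_sum : ∑ j, w2 j = 1

namespace MAC

variable {nr nt k1 k2 : ℕ}

/-- Gaussian conditional density `p_{y|x1,x2}(y)
  = π^{-nr} exp(-‖y - √snr·H1P1x1 - √snr·H2P2x2‖²)`. -/
def pcond (S : MAC nr nt k1 k2) (snr : ℝ) (i : Fin k1) (j : Fin k2)
    (y : Fin nr → ℂ) : ℝ :=
  (Real.pi ^ nr)⁻¹ *
    Real.exp (-(cnormSq (y - Real.sqrt snr • ((S.H1 * S.P1).mulVec (S.a1 i))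
      - Real.sqrt snr • ((S.H2 * S.P2).mulVec (S.a2 j)))))

/-- Output density `p_y(y)`, a finite Gaussian mixture. -/
def pout (S : MAC nr nt k1 k2) (snr : ℝ) (y : Fin nr → ℂ) : ℝ :=
  ∑ i, ∑ j, S.w1 i * S.w2 j * S.pcond snr i j y

/-- Mutual information `I(snr) = -nr·log(π e) - ∫ p_y log p_y`. -/
def MI (S : MAC nr nt k1 k2) (snr : ℝ) : ℝ :=
  -((nr : ℝ) * Real.log (Real.pi * Real.exp 1)) -
    ∫ y : Fin nr → ℂ, S.pout snr y * Real.log (S.pout snr y)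

/-- Conditional-mean estimate `x̂1(y)`. -/
def xhat1 (S : MAC nr nt k1 k2) (snr : ℝ) (y : Fin nr → ℂ) : Fin nt → ℂ :=
  (S.pout snr y)⁻¹ •
    ∑ i, ∑ j, (S.w1 i * S.w2 j * S.pcond snr i j y) • S.a1 i

/-- Conditional-mean estimate `x̂2(y)`. -/
def xhat2 (S : MAC nr nt k1 k2) (snr : ℝ) (y : Fin nr → ℂ) : Fin nt → ℂ :=
  (S.pout snr y)⁻¹ •
    ∑ i, ∑ j, (S.w1 i * S.w2 j * S.pcond snr i j y) • S.a2 j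

/-- Per-user MMSE matrix `E1(snr) = E[(x1 - x̂1(y))(x1 - x̂1(y))†]`, the
expectation taken over the joint law of `(x1, x2, y)`. -/
def Emat1 (S : MAC nr nt k1 k2) (snr : ℝ) : Matrix (Fin nt) (Fin nt) ℂ :=
  Matrix.of fun k l => ∑ i, ∑ j,
    ∫ y : Fin nr → ℂ, (S.w1 i * S.w2 j * S.pcond snr i j y) •
      ((S.a1 i k - S.xhat1 snr y k) * (starRingEnd ℂ) (S.a1 i l - S.xhat1 snr y l))

/-- Per-user MMSE matrix `E2(snr) = E[(x2 - x̂2(y))(x2 - x̂2(y))†]`. -/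
def Emat2 (S : MAC nr nt k1 k2) (snr : ℝ) : Matrix (Fin nt) (Fin nt) ℂ :=
  Matrix.of fun k l => ∑ i, ∑ j,
    ∫ y : Fin nr → ℂ, (S.w1 i * S.w2 j * S.pcond snr i j y) •
      ((S.a2 j k - S.xhat2 snr y k) * (starRingEnd ℂ) (S.a2 j l - S.xhat2 snr y l))

/-- Cross-correlation matrix `E[x̂1 x̂2†] = ∫ p_y(y)·x̂1(y)·x̂2(y)† dy`. -/
def cross12 (S : MAC nr nt k1 k2) (snr : ℝ) : Matrix (Fin nt) (Fin nt) ℂ :=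
  Matrix.of fun k l =>
    ∫ y : Fin nr → ℂ, (S.pout snr y) •
      (S.xhat1 snr y k * (starRingEnd ℂ) (S.xhat2 snr y l))

/-- Cross-correlation matrix `E[x̂2 x̂1†] = (E[x̂1 x̂2†])†`. -/
def cross21 (S : MAC nr nt k1 k2) (snr : ℝ) : Matrix (Fin nt) (Fin nt) ℂ :=
  (S.cross12 snr)ᴴ

end MAC

namespace MAC

variable {nr nt k1 k2 : ℕ}

/-- The noiseless channel output for the `i`-th atom of user 1 and the `j`-th atom of user 2,
that is, the centre of the corresponding Gaussian component. -/
def centre (S : MAC nr nt k1 k2) (snr : ℝ) (i : Fin k1) (j : Fin k2) : Fin nr → ℂ :=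
  Real.sqrt snr • ((S.H1 * S.P1).mulVec (S.a1 i))
    + Real.sqrt snr • ((S.H2 * S.P2).mulVec (S.a2 j))

/-- The conjugate Wirtinger gradient of `v ↦ ‖v‖²` is `v`. -/
lemma hasDerivAt_cnormSq {n : ℕ} (v Δ : Fin n → ℂ) :
    HasDerivAt (fun t : ℝ => cnormSq (v + t • Δ))
      (2 * (∑ k, v k * (starRingEnd ℂ) (Δ k)).re) 0 := by
  unfold cnormSq
  rw [Complex.re_sum, Finset.mul_sum]
  refine HasDerivAt.fun_sum fun k _ => ?_
  have hexp : (fun t : ℝ => Complex.normSq ((v + t • Δ) k)) = fun t : ℝ =>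
      Complex.normSq (v k) + t * (2 * (v k * (starRingEnd ℂ) (Δ k)).re)
        + t ^ 2 * Complex.normSq (Δ k) := by
    funext t
    simp [Complex.normSq_apply]
    ring
  rw [hexp]
  have h := (((hasDerivAt_id (0 : ℝ)).mul_const
    (2 * (v k * (starRingEnd ℂ) (Δ k)).re)).const_add (Complex.normSq (v k))).fun_add
    (((hasDerivAt_id (0 : ℝ)).fun_pow 2).mul_const (Complex.normSq (Δ k)))
  exact h.congr_deriv (by simp)

lemma pcond_eq (S : MAC nr nt k1 k2) (snr : ℝ) (i : Fin k1) (j : Fin k2) (y : Fin nr → ℂ) :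
    S.pcond snr i j y = (Real.pi ^ nr)⁻¹ * Real.exp (-(cnormSq (y - S.centre snr i j))) := by
  rw [pcond, centre, sub_sub]

lemma pcond_pos (S : MAC nr nt k1 k2) (snr : ℝ) (i : Fin k1) (j : Fin k2) (y : Fin nr → ℂ) :
    0 < S.pcond snr i j y := by
  unfold pcond
  positivity

lemma hasDerivAt_pcond (S : MAC nr nt k1 k2) (snr : ℝ) (i : Fin k1) (j : Fin k2)
    (y Δ : Fin nr → ℂ) :
    HasDerivAt (fun t : ℝ => S.pcond snr i j (y + t • Δ))
      (S.pcond snr i j y *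
        (2 * (∑ k, (S.centre snr i j - y) k * (starRingEnd ℂ) (Δ k)).re)) 0 := by
  simp only [pcond_eq, add_sub_right_comm]
  have h := ((hasDerivAt_cnormSq (y - S.centre snr i j) Δ).fun_neg.exp).const_mul
    ((Real.pi ^ nr)⁻¹)
  refine h.congr_deriv ?_
  have hneg : ∑ k, (S.centre snr i j - y) k * (starRingEnd ℂ) (Δ k)
      = -∑ k, (y - S.centre snr i j) k * (starRingEnd ℂ) (Δ k) := by
    rw [← Finset.sum_neg_distrib]
    refine Finset.sum_congr rfl fun k _ => ?_
    simp only [Pi.sub_apply]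
    ring
  rw [hneg]
  simp only [zero_smul, add_zero, Complex.neg_re]
  ring

/-- The joint weights sum to `1`, so at least one is positive. -/
lemma pout_pos (S : MAC nr nt k1 k2) (snr : ℝ) (y : Fin nr → ℂ) : 0 < S.pout snr y := by
  have hw : ∀ i j, 0 ≤ S.w1 i * S.w2 j := fun i j => mul_nonneg (S.w1_nonneg i) (S.w2_nonneg j)
  obtain ⟨i, -, hi'⟩ := Finset.exists_ne_zero_of_sum_ne_zero
    (S.w1_sum.trans_ne one_ne_zero)
  have hi : 0 < S.w1 i := (S.w1_nonneg i).lt_of_ne' hi'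
  obtain ⟨j, -, hj'⟩ := Finset.exists_ne_zero_of_sum_ne_zero
    (S.w2_sum.trans_ne one_ne_zero)
  have hj : 0 < S.w2 j := (S.w2_nonneg j).lt_of_ne' hj'
  have hterm : ∀ i j, 0 ≤ S.w1 i * S.w2 j * S.pcond snr i j y :=
    fun i j => mul_nonneg (hw i j) (S.pcond_pos snr i j y).le
  refine Finset.sum_pos' (fun i _ => Finset.sum_nonneg fun j _ => hterm i j)
    ⟨i, Finset.mem_univ i, ?_⟩
  exact Finset.sum_pos' (fun j _ => hterm i j)
    ⟨j, Finset.mem_univ j, mul_pos (mul_pos hi hj) (S.pcond_pos snr i j y)⟩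

lemma hasDerivAt_pout (S : MAC nr nt k1 k2) (snr : ℝ) (y Δ : Fin nr → ℂ) :
    HasDerivAt (fun t : ℝ => S.pout snr (y + t • Δ))
      (2 * (∑ k, (∑ i, ∑ j, (S.w1 i * S.w2 j * S.pcond snr i j y) •
        (S.centre snr i j - y)) k * (starRingEnd ℂ) (Δ k)).re) 0 := by
  have h : HasDerivAt (fun t : ℝ => S.pout snr (y + t • Δ))
      (∑ i, ∑ j, S.w1 i * S.w2 j * (S.pcond snr i j y *
        (2 * (∑ k, (S.centre snr i j - y) k * (starRingEnd ℂ) (Δ k)).re))) 0 :=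
    HasDerivAt.fun_sum fun i _ => HasDerivAt.fun_sum fun j _ =>
      (S.hasDerivAt_pcond snr i j y Δ).const_mul (S.w1 i * S.w2 j)
  refine h.congr_deriv (Eq.symm ?_)
  simp only [Finset.sum_apply, Pi.smul_apply, Finset.sum_mul, smul_mul_assoc]
  rw [Finset.sum_comm, Complex.re_sum, Finset.mul_sum]
  refine Finset.sum_congr rfl fun i _ => ?_
  rw [Finset.sum_comm, Complex.re_sum, Finset.mul_sum]
  refine Finset.sum_congr rfl fun j _ => ?_
  rw [← Finset.smul_sum, Complex.smul_re, smul_eq_mul]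
  ring

/-- Nondegeneracy of the real pairing `(g, Δ) ↦ Re ∑ k, g k * conj (Δ k)`. -/
lemma eq_of_re_pairing {n : ℕ} {g h : Fin n → ℂ}
    (H : ∀ Δ : Fin n → ℂ, (∑ k, g k * (starRingEnd ℂ) (Δ k)).re
      = (∑ k, h k * (starRingEnd ℂ) (Δ k)).re) : g = h := by
  have hz : ∑ k, Complex.normSq (g k - h k) = 0 := by
    have h0 := sub_eq_zero.mpr (H (g - h))
    rw [← Complex.sub_re, ← Finset.sum_sub_distrib, Complex.re_sum] at h0
    rw [← h0]
    refine Finset.sum_congr rfl fun k _ => ?_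
    rw [← sub_mul, Pi.sub_apply, Complex.mul_conj, Complex.ofReal_re]
  funext k
  have hk := (Finset.sum_eq_zero_iff_of_nonneg fun k _ => Complex.normSq_nonneg _).mp hz k
    (Finset.mem_univ k)
  exact sub_eq_zero.mp (Complex.normSq_eq_zero.mp hk)

lemma pout_smul_estimates (S : MAC nr nt k1 k2) (snr : ℝ) (y : Fin nr → ℂ) :
    S.pout snr y • (Real.sqrt snr • (S.H1 * S.P1).mulVec (S.xhat1 snr y)
      + Real.sqrt snr • (S.H2 * S.P2).mulVec (S.xhat2 snr y))
      = ∑ i, ∑ j, (S.w1 i * S.w2 j * S.pcond snr i j y) • S.centre snr i j := by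
  have hp := (S.pout_pos snr y).ne'
  unfold xhat1 xhat2 centre
  simp only [Matrix.mulVec_smul, Matrix.mulVec_sum, smul_add, Finset.sum_add_distrib]
  congr 1
  all_goals
    rw [smul_comm (Real.sqrt snr), smul_inv_smul₀ hp]
    simp only [Finset.smul_sum]
    exact Finset.sum_congr rfl fun i _ => Finset.sum_congr rfl fun j _ => smul_comm _ _ _

end MAC

/-- **Theorem 5 (conditional-mean estimate identity).** For every `y`,
`√snr·H1·P1·x̂1(y) + √snr·H2·P2·x̂2(y) = y + ∇_y p_y(y) / p_y(y)`, where
`g = ∇_y p_y(y)` is the conjugate Wirtinger gradient of `p_y` at `y`,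
characterized by `d/dt p_y(y + tΔ)|_{t=0} = 2·Re⟨g, Δ⟩` for all directions
`Δ ∈ ℂ^{nr}`. -/
theorem MAC.estimate_identity (nr nt k1 k2 : ℕ) (S : MAC nr nt k1 k2)
    (snr : ℝ) (hsnr : 0 < snr) (y : Fin nr → ℂ) (g : Fin nr → ℂ)
    (hg : ∀ Δ : Fin nr → ℂ,
      HasDerivAt (fun t : ℝ => S.pout snr (y + t • Δ))
        (2 * (∑ i, g i * (starRingEnd ℂ) (Δ i)).re) 0) :
    Real.sqrt snr • (S.H1 * S.P1).mulVec (S.xhat1 snr y)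
      + Real.sqrt snr • (S.H2 * S.P2).mulVec (S.xhat2 snr y)
      = y + (S.pout snr y)⁻¹ • g := by
  have hgG : g = ∑ i, ∑ j, (S.w1 i * S.w2 j * S.pcond snr i j y) • (S.centre snr i j - y) :=
    MAC.eq_of_re_pairing fun Δ =>
      mul_left_cancel₀ two_ne_zero ((hg Δ).unique (S.hasDerivAt_pout snr y Δ))
  have hp := (S.pout_pos snr y).ne'
  apply smul_right_injective _ hp
  beta_reduce
  rw [S.pout_smul_estimates, smul_add, smul_inv_smul₀ hp, hgG]
  simp only [smul_sub, Finset.sum_sub_distrib, ← Finset.sum_smul]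
  exact (add_sub_cancel _ _).symm
end
end

section
/- Corollary of the estimate identity for a single-user invertible channel: for the single-user channel y = √snr·H·P·x + n with nr = nt, a finite-support input x, and H·P invertible, the conditional-mean estimate satisfies x̂(y) = (1/√snr)·(H·P)^{-1}·(y + ∇_y p_y(y)/p_y(y)) for every y ∈ ℂ^{nr}, where ∇_y p_y is the conjugate Wirtinger gradient of the output density. -/
/-! The mixture density is a finite weighted sum of Gaussians, and the directional derivative at `y`
of the Gaussian centred at `m` is `-2 Re ⟨y - m, Δ⟩` times its value. Since a vector is determined by
the real parts of its Hermitian products with all vectors, the conjugate Wirtinger gradient is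
`g = ∑ i, w i * p i • (√snr • HP a i - y) = p_y(y) • (√snr • HP x̂(y) - y)`, using linearity
of `HP`. As `p_y(y) > 0`, this is solved for `x̂(y)` by inverting `HP`. -/

open MeasureTheory Matrix

noncomputable section

/-- Data of a single-user Gaussian channel `y = √snr·H·P·x + n` with a
finite-support input: channel matrix, precoder, and the atoms and weights of
the input distribution. -/
structure SU (nr nt k : ℕ) where
  H : Matrix (Fin nr) (Fin nt) ℂ
  P : Matrix (Fin nt) (Fin nt) ℂ
  w : Fin k → ℝ
  a : Fin k → Fin nt → ℂ
  w_nonneg : ∀ i, 0 ≤ w i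
  w_sum : ∑ i, w i = 1

namespace SU

variable {nr nt k : ℕ}

/-- Gaussian conditional density `p_{y|x}(y) = π^{-nr}·exp(-‖y - √snr·HPx‖²)`. -/
def pcond (S : SU nr nt k) (snr : ℝ) (i : Fin k) (y : Fin nr → ℂ) : ℝ :=
  (Real.pi ^ nr)⁻¹ *
    Real.exp (-(cnormSq (y - Real.sqrt snr • ((S.H * S.P).mulVec (S.a i)))))

/-- Output density `p_y(y)`, a finite Gaussian mixture. -/
def pout (S : SU nr nt k) (snr : ℝ) (y : Fin nr → ℂ) : ℝ :=
  ∑ i, S.w i * S.pcond snr i y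

/-- Mutual information `I(snr) = -nr·log(π e) - ∫ p_y log p_y`. -/
def MI (S : SU nr nt k) (snr : ℝ) : ℝ :=
  -((nr : ℝ) * Real.log (Real.pi * Real.exp 1)) -
    ∫ y : Fin nr → ℂ, S.pout snr y * Real.log (S.pout snr y)

/-- Conditional-mean estimate `x̂(y) = Σ_x x·p_{y|x}(y)·p_x(x) / p_y(y)`. -/
def xhat (S : SU nr nt k) (snr : ℝ) (y : Fin nr → ℂ) : Fin nt → ℂ :=
  (S.pout snr y)⁻¹ • ∑ i, (S.w i * S.pcond snr i y) • S.a i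

/-- MMSE matrix `E(snr) = E[(x - x̂(y))(x - x̂(y))†]`, the expectation over the
joint law of `(x, y)`. -/
def Emat (S : SU nr nt k) (snr : ℝ) : Matrix (Fin nt) (Fin nt) ℂ :=
  Matrix.of fun p q => ∑ i,
    ∫ y : Fin nr → ℂ, (S.w i * S.pcond snr i y) •
      ((S.a i p - S.xhat snr y p) * (starRingEnd ℂ) (S.a i q - S.xhat snr y q))

end SU

namespace SU

lemma hasDerivAt_cnormSq_line {n : ℕ} (v Δ : Fin n → ℂ) :
    HasDerivAt (fun t : ℝ => cnormSq (v + t • Δ))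
      (2 * (∑ i, v i * (starRingEnd ℂ) (Δ i)).re) 0 := by
  have h : ∀ i ∈ Finset.univ, HasDerivAt (fun t : ℝ => Complex.normSq ((v + t • Δ) i))
      (2 * (v i * (starRingEnd ℂ) (Δ i)).re) 0 := by
    intro i _
    have e : (fun t : ℝ => Complex.normSq ((v + t • Δ) i)) = fun t : ℝ =>
        ((v i).re + t * (Δ i).re) ^ 2 + ((v i).im + t * (Δ i).im) ^ 2 := by
      funext t
      simp [Complex.normSq_apply]
      ring
    rw [e]
    have hre := (((hasDerivAt_id (0 : ℝ)).mul_const (Δ i).re).const_add (v i).re).pow 2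
    have him := (((hasDerivAt_id (0 : ℝ)).mul_const (Δ i).im).const_add (v i).im).pow 2
    refine (hre.add him).congr_deriv ?_
    simp
    ring
  have hs := HasDerivAt.fun_sum h
  simpa only [cnormSq, Complex.re_sum, Finset.mul_sum] using hs

lemma hasDerivAt_pcond_line {n k : ℕ} (S : SU n n k) (snr : ℝ) (i : Fin k) (y Δ : Fin n → ℂ) :
    HasDerivAt (fun t : ℝ => S.pcond snr i (y + t • Δ))
      (S.pcond snr i y * -(2 * (∑ j, (y - Real.sqrt snr • (S.H * S.P).mulVec (S.a i)) j *
        (starRingEnd ℂ) (Δ j)).re)) 0 := by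
  have h := ((hasDerivAt_cnormSq_line (y - Real.sqrt snr • (S.H * S.P).mulVec (S.a i)) Δ).neg.exp
    ).const_mul ((Real.pi ^ n)⁻¹)
  have e : (fun t : ℝ => S.pcond snr i (y + t • Δ)) = fun t : ℝ => (Real.pi ^ n)⁻¹ *
      Real.exp (-cnormSq (y - Real.sqrt snr • (S.H * S.P).mulVec (S.a i) + t • Δ)) := by
    funext t
    rw [pcond, add_sub_right_comm]
  rw [e]
  refine HasDerivAt.congr_deriv h ?_
  simp [pcond, mul_assoc]

lemma pout_pos {n k : ℕ} (S : SU n n k) (snr : ℝ) (y : Fin n → ℂ) : 0 < S.pout snr y := by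
  have hp : ∀ i, 0 < S.pcond snr i y := fun i => by unfold pcond; positivity
  have h0 : ∀ i ∈ Finset.univ, 0 ≤ S.w i * S.pcond snr i y :=
    fun i _ => mul_nonneg (S.w_nonneg i) (hp i).le
  -- The weights sum to one, so at least one of them is positive.
  obtain ⟨i, hi, hwi⟩ : ∃ i ∈ Finset.univ, 0 < S.w i := by
    refine Finset.exists_lt_of_sum_lt (f := fun _ => (0 : ℝ)) ?_
    simp [S.w_sum]
  exact Finset.sum_pos' h0 ⟨i, hi, mul_pos hwi (hp i)⟩

/-- A complex vector is determined by the real parts of its Hermitian products. -/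
lemma eq_of_re_sum_mul_conj {n : ℕ} (g G : Fin n → ℂ)
    (h : ∀ Δ : Fin n → ℂ, (∑ i, g i * (starRingEnd ℂ) (Δ i)).re =
      (∑ i, G i * (starRingEnd ℂ) (Δ i)).re) : g = G := by
  have h1 := sub_eq_zero.2 (h (g - G))
  rw [← Complex.sub_re, ← Finset.sum_sub_distrib] at h1
  have h2 : ∀ i, g i * (starRingEnd ℂ) ((g - G) i) - G i * (starRingEnd ℂ) ((g - G) i) =
      (Complex.normSq (g i - G i) : ℂ) := fun i => by
    rw [← sub_mul, Pi.sub_apply, Complex.mul_conj]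
  simp only [h2, Complex.re_sum, Complex.ofReal_re] at h1
  rw [Finset.sum_eq_zero_iff_of_nonneg (fun i _ => Complex.normSq_nonneg _)] at h1
  funext i
  exact sub_eq_zero.1 (Complex.normSq_eq_zero.1 (h1 i (Finset.mem_univ i)))

/-- The conjugate Wirtinger gradient of the Gaussian mixture. -/
lemma gradient_eq {n k : ℕ} (S : SU n n k) (snr : ℝ) (y g : Fin n → ℂ)
    (hg : ∀ Δ : Fin n → ℂ,
      HasDerivAt (fun t : ℝ => S.pout snr (y + t • Δ))
        (2 * (∑ i, g i * (starRingEnd ℂ) (Δ i)).re) 0) :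
    g = ∑ i, (S.w i * S.pcond snr i y) •
      (Real.sqrt snr • (S.H * S.P).mulVec (S.a i) - y) := by
  apply eq_of_re_sum_mul_conj
  intro Δ
  have h := (hg Δ).unique (HasDerivAt.fun_sum fun i (_ : i ∈ Finset.univ) =>
    (hasDerivAt_pcond_line S snr i y Δ).const_mul (S.w i))
  have h2 : (∑ j, (∑ i, (S.w i * S.pcond snr i y) •
      (Real.sqrt snr • (S.H * S.P).mulVec (S.a i) - y)) j * (starRingEnd ℂ) (Δ j)).re =
      ∑ i, (S.w i * S.pcond snr i y) * -(∑ j, (y - Real.sqrt snr •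
        (S.H * S.P).mulVec (S.a i)) j * (starRingEnd ℂ) (Δ j)).re := by
    simp only [Finset.sum_apply, Finset.sum_mul]
    rw [Finset.sum_comm, Complex.re_sum]
    refine Finset.sum_congr rfl fun i _ => ?_
    rw [← Complex.neg_re, ← Finset.sum_neg_distrib, ← Complex.re_ofReal_mul, Finset.mul_sum]
    congr 1
    refine Finset.sum_congr rfl fun j _ => ?_
    simp only [Pi.smul_apply, Pi.sub_apply, Complex.real_smul]
    ring
  rw [h2]
  have h3 : ∀ A : ℝ, 2 * (∑ i, g i * (starRingEnd ℂ) (Δ i)).re = 2 * A →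
      (∑ i, g i * (starRingEnd ℂ) (Δ i)).re = A := fun A hA => by linarith
  apply h3
  rw [h, Finset.mul_sum]
  exact Finset.sum_congr rfl fun i _ => by ring

end SU

/-- **Corollary of the estimate identity for a single-user invertible
channel.** For `y = √snr·H·P·x + n` with `nr = nt = n`, a finite-support
input `x` and `H·P` invertible, for every `y`,
`x̂(y) = (1/√snr)·(H·P)⁻¹·(y + ∇_y p_y(y)/p_y(y))`, where `g = ∇_y p_y(y)` is
the conjugate Wirtinger gradient of the output density at `y`, characterized
by `d/dt p_y(y + tΔ)|_{t=0} = 2·Re⟨g, Δ⟩` for all directions `Δ ∈ ℂ^n`. -/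
theorem SU.estimate_identity_invertible (n k : ℕ) (S : SU n n k)
    (snr : ℝ) (hsnr : 0 < snr) (hinv : IsUnit (S.H * S.P))
    (y : Fin n → ℂ) (g : Fin n → ℂ)
    (hg : ∀ Δ : Fin n → ℂ,
      HasDerivAt (fun t : ℝ => S.pout snr (y + t • Δ))
        (2 * (∑ i, g i * (starRingEnd ℂ) (Δ i)).re) 0) :
    S.xhat snr y =
      (Real.sqrt snr)⁻¹ • (S.H * S.P)⁻¹.mulVec (y + (S.pout snr y)⁻¹ • g) := by
  have hp := (S.pout_pos snr y).ne'
  have hs := (Real.sqrt_pos.2 hsnr).ne'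
  have key : y + (S.pout snr y)⁻¹ • g =
      Real.sqrt snr • (S.H * S.P).mulVec (S.xhat snr y) := by
    have hx : g = Real.sqrt snr • (S.H * S.P).mulVec
        (∑ i, (S.w i * S.pcond snr i y) • S.a i) - S.pout snr y • y := by
      rw [SU.gradient_eq S snr y g hg, Matrix.mulVec_sum, SU.pout, Finset.sum_smul,
        Finset.smul_sum, ← Finset.sum_sub_distrib]
      refine Finset.sum_congr rfl fun i _ => ?_
      rw [smul_sub, Matrix.mulVec_smul, smul_comm]
    rw [hx, SU.xhat, Matrix.mulVec_smul, smul_sub, inv_smul_smul₀ hp, smul_comm]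
    abel
  rw [key, Matrix.mulVec_smul, inv_smul_smul₀ hs, Matrix.mulVec_mulVec,
    Matrix.nonsing_inv_mul _ ((Matrix.isUnit_iff_isUnit_det _).1 hinv), Matrix.one_mulVec]
end
end
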